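/- Let p_1, p_2, p_3 be three distinct non-collinear points of P^2 and let Z' = 2p_1 + 2p_2 + p_3 be the fat points scheme with double points at p_1 and p_2 and a simple point at p_3. Then the Waldschmidt constant of I(Z') equals 5/2. -/

import Mathlib

noncomputable section

open MvPolynomial

/-- `alpha J` is the least degree of a nonzero homogeneous form in the ideal `J`. -/
def alpha {kk : Type*} [Field kk] {σ : Type*} (J : Ideal (MvPolynomial σ kk)) : ℕ :=
  sInf {d : ℕ | ∃ f ∈ J, f ≠ 0 ∧ MvPolynomial.IsHomogeneous f d}

/-- The homogeneous (prime) ideal of the point of `ℙ²` represented by the nonzero vector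
`p`, generated by the linear forms vanishing at `p`. -/
def pointIdeal {kk : Type*} [Field kk] (p : Fin 3 → kk) : Ideal (MvPolynomial (Fin 3) kk) :=
  Ideal.span {f | f.IsHomogeneous 1 ∧ MvPolynomial.eval p f = 0}

/-- Two nonzero vectors represent the same point of `ℙ²`. -/
def projEq {kk : Type*} [Field kk] (p q : Fin 3 → kk) : Prop :=
  ∃ c : kk, c ≠ 0 ∧ q = c • p

/-!
Choose coordinates in which the three points are the coordinate points of `ℙ²`.  Then `I(p_j)` is
generated by the variables other than `X_j`, so a form lies in `⋂ I(p_j) ^ m_j` iff each of its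
monomials `X ^ s` does, i.e. iff `m_j ≤ ∑_{i ≠ j} s_i` for all `j`.  Hence `α` is the optimum of an
integer program in the exponent `s`.  For the multiplicities `(2k, 2k, k)`, adding the three
constraints gives `5k ≤ 2 deg s`, and `s = (⌈k/2⌉, ⌈k/2⌉, 2k - ⌈k/2⌉)` attains `⌈5k/2⌉`.
Thus `α / k ≥ 5/2`, with equality for even `k`.
-/

section MonomialIdeals

variable {σ R : Type*} [CommSemiring R]

theorem span_X_image_pow (t : Set σ) (n : ℕ) :
    Ideal.span (X '' t : Set (MvPolynomial σ R)) ^ n =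
      Ideal.span ((fun s => monomial s 1) '' {s | (s.support : Set σ) ⊆ t ∧ s.degree = n}) := by
  rw [Ideal.span, Submodule.span_pow, Finsupp.image_pow_eq_finsuppProd_image]
  simp [monomial_eq, Finsupp.degree, and_comm]

theorem add_apply_le_degree_of_mem_span_X_compl_pow {j : σ} {n : ℕ} {f : MvPolynomial σ R}
    (hf : f ∈ Ideal.span (X '' {j}ᶜ) ^ n) {s : σ →₀ ℕ} (hs : s ∈ f.support) :
    n + s j ≤ s.degree := by
  rw [span_X_image_pow, mem_ideal_span_monomial_image] at hf
  obtain ⟨u, ⟨hu, rfl⟩, hus⟩ := hf s hs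
  obtain ⟨v, rfl⟩ := exists_add_of_le hus
  have huj : u j = 0 := by
    by_contra h
    exact hu (Finsupp.mem_support_iff.2 h) rfl
  simpa [huj] using Finsupp.le_degree j v

theorem mem_span_X_compl_of_eval_single_eq_zero [DecidableEq σ] {j : σ}
    {f : MvPolynomial σ R} (hf : f.IsHomogeneous 1) (hfj : eval (Pi.single j 1) f = 0) :
    f ∈ Ideal.span (X '' {j}ᶜ) := by
  rw [← mem_homogeneousSubmodule, homogeneousSubmodule_one_eq_span_X,
    Finsupp.mem_span_range_iff_exists_finsupp] at hf
  obtain ⟨c, rfl⟩ := hf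
  have hcj : c j = 0 := by
    simpa [Finsupp.sum, smul_eval, Pi.single_apply] using hfj
  refine Ideal.sum_mem _ fun i _ => ?_
  by_cases hij : i = j
  · simp [hij, hcj]
  · exact Submodule.smul_of_tower_mem _ _ (Ideal.subset_span ⟨i, hij, rfl⟩)

theorem prod_pow_mem_ideal_pow {ι : Type*} [Fintype ι] {I : Ideal R} {l : ι → R} {j : ι}
    (hl : ∀ i ≠ j, l i ∈ I) {s : ι → ℕ} {n : ℕ} (hn : n + s j ≤ ∑ i, s i) :
    ∏ i, l i ^ s i ∈ I ^ n := by
  classical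
  rw [← Finset.add_sum_erase _ _ (Finset.mem_univ j)] at hn
  rw [← Finset.mul_prod_erase _ _ (Finset.mem_univ j)]
  refine Ideal.mul_mem_left _ _
    (Ideal.pow_le_pow_right (by lia : n ≤ ∑ i ∈ Finset.univ.erase j, s i) ?_)
  rw [← Finset.prod_pow_eq_pow_sum]
  exact Ideal.prod_mem_prod fun i hi => Ideal.pow_mem_pow (hl i (Finset.ne_of_mem_erase hi)) _

end MonomialIdeals

section LinearSubstitution

variable {m n R : Type*} [Fintype n] [CommSemiring R]

theorem eval_bind₁_toMvPolynomial (M : Matrix m n R) (c : n → R) (f : MvPolynomial m R) :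
    eval c (bind₁ M.toMvPolynomial f) = eval (M.mulVec c) f := by
  simp only [← aeval_eq_eval, aeval_bind₁]
  simp only [aeval_eq_eval, Matrix.toMvPolynomial_eval_eq_apply]

theorem isHomogeneous_bind₁_toMvPolynomial (M : Matrix m n R) {f : MvPolynomial m R} {d : ℕ}
    (hf : f.IsHomogeneous d) : (bind₁ M.toMvPolynomial f).IsHomogeneous d := by
  simpa only [bind₁, one_mul] using hf.aeval M.toMvPolynomial M.toMvPolynomial_isHomogeneous

theorem bind₁_toMvPolynomial_injective [Finite m] [DecidableEq m] {M : Matrix m n R}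
    {N : Matrix n m R} (hMN : M * N = 1) : Function.Injective (bind₁ M.toMvPolynomial) := by
  have := Fintype.ofFinite m
  refine Function.LeftInverse.injective (g := bind₁ N.toMvPolynomial) fun f => ?_
  simp only [bind₁_bind₁, ← Matrix.toMvPolynomial_mul, hMN, Matrix.toMvPolynomial_one, bind₁_X_left,
    AlgHom.id_apply]

end LinearSubstitution

theorem linearIndependent_of_forall_linearForm_eq_zero {n K : Type*} [Finite n] [Field K]
    {p : n → n → K}
    (hp : ∀ g : MvPolynomial n K, g.IsHomogeneous 1 → (∀ i, eval (p i) g = 0) → g = 0) :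
    LinearIndependent K p := by
  classical
  have := Fintype.ofFinite n
  suffices IsUnit (Matrix.of p) from Matrix.linearIndependent_rows_iff_isUnit.2 this
  rw [← Matrix.mulVec_injective_iff_isUnit]
  refine (injective_iff_map_eq_zero (Matrix.of p).mulVecLin).2 fun v hv => ?_
  let g := (Matrix.replicateRow Unit v).toMvPolynomial ()
  have eval_g (c : n → K) : eval c g = v ⬝ᵥ c := Matrix.toMvPolynomial_eval_eq_apply _ _ _
  have hg : g = 0 := hp g (Matrix.toMvPolynomial_isHomogeneous _ _) fun i =>
    (eval_g _).trans ((dotProduct_comm _ _).trans (congrFun hv i))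
  ext i
  simpa [hg] using (eval_g (Pi.single i 1)).symm

section FatPoints

variable {kk : Type*} [Field kk]

theorem map_pointIdeal_col_le (M : Matrix (Fin 3) (Fin 3) kk) (j : Fin 3) :
    (pointIdeal (M.col j)).map (bind₁ M.toMvPolynomial) ≤ Ideal.span (X '' {j}ᶜ) := by
  rw [Ideal.map_le_iff_le_comap, pointIdeal, Ideal.span_le]
  rintro g ⟨hg, hgj⟩
  refine mem_span_X_compl_of_eval_single_eq_zero (isHomogeneous_bind₁_toMvPolynomial M hg) ?_
  rwa [eval_bind₁_toMvPolynomial, Matrix.mulVec_single_one]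

theorem exists_exponent_of_mem_pointIdeal_pow {M N : Matrix (Fin 3) (Fin 3) kk} (hMN : M * N = 1)
    {m : Fin 3 → ℕ} {d : ℕ} {f : MvPolynomial (Fin 3) kk}
    (hfm : ∀ j, f ∈ pointIdeal (M.col j) ^ m j) (hf : f ≠ 0) (hfd : f.IsHomogeneous d) :
    ∃ s : Fin 3 → ℕ, ∑ i, s i = d ∧ ∀ j, m j + s j ≤ d := by
  have hne : bind₁ M.toMvPolynomial f ≠ 0 :=
    (map_ne_zero_iff _ (bind₁_toMvPolynomial_injective hMN)).2 hf
  obtain ⟨s, hs⟩ := support_nonempty.2 hne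
  have hsd : s.degree = d := by
    rw [Finsupp.degree_apply]
    exact ((isHomogeneous_bind₁_toMvPolynomial M hfd).degree_eq_sum_deg_support hs).symm
  refine ⟨s, by rw [← hsd, Finsupp.degree_eq_sum], fun j => hsd ▸ ?_⟩
  refine add_apply_le_degree_of_mem_span_X_compl_pow
    (Ideal.pow_right_mono (map_pointIdeal_col_le M j) _ ?_) hs
  rw [← Ideal.map_pow]
  exact Ideal.mem_map_of_mem _ (hfm j)

theorem exists_mem_pointIdeal_pow_of_exponent {M N : Matrix (Fin 3) (Fin 3) kk} (hNM : N * M = 1)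
    {m s : Fin 3 → ℕ} (hs : ∀ j, m j + s j ≤ ∑ i, s i) :
    ∃ f, (∀ j, f ∈ pointIdeal (M.col j) ^ m j) ∧ f ≠ 0 ∧ f.IsHomogeneous (∑ i, s i) := by
  have eval_dual (i j : Fin 3) :
      eval (M.col j) (N.toMvPolynomial i) = (1 : Matrix (Fin 3) (Fin 3) kk) i j := by
    rw [Matrix.toMvPolynomial_eval_eq_apply, ← hNM]
    rfl
  refine ⟨∏ i, N.toMvPolynomial i ^ s i, fun j => ?_, ?_, ?_⟩
  · refine prod_pow_mem_ideal_pow (fun i hij => Ideal.subset_span ?_) (hs j)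
    exact ⟨N.toMvPolynomial_isHomogeneous i, (eval_dual i j).trans (Matrix.one_apply_ne hij)⟩
  · refine Finset.prod_ne_zero_iff.2 fun i _ => pow_ne_zero _ fun h => ?_
    simpa [h] using eval_dual i i
  · refine IsHomogeneous.prod _ _ _ fun i _ => ?_
    simpa only [one_mul] using (N.toMvPolynomial_isHomogeneous i).pow (s i)

theorem alpha_iInf_pointIdeal_pow {p : Fin 3 → Fin 3 → kk} (hp : LinearIndependent kk p)
    (m : Fin 3 → ℕ) :
    alpha (⨅ j, pointIdeal (p j) ^ m j) =
      sInf {d | ∃ s : Fin 3 → ℕ, ∑ i, s i = d ∧ ∀ j, m j + s j ≤ d} := by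
  let M : Matrix (Fin 3) (Fin 3) kk := (Matrix.of p).transpose
  obtain ⟨N, hMN, hNM⟩ := isUnit_iff_exists.1
    (Matrix.linearIndependent_cols_iff_isUnit.1 (hp : LinearIndependent kk M.col))
  unfold alpha
  congr 1
  ext d
  simp only [Submodule.mem_iInf, Set.mem_ofPred_eq]
  constructor
  · rintro ⟨f, hfm, hf, hfd⟩
    exact exists_exponent_of_mem_pointIdeal_pow hMN hfm hf hfd
  · rintro ⟨s, rfl, hs⟩
    exact exists_mem_pointIdeal_pow_of_exponent hNM hs

theorem alpha_pointIdeal_two_double_points {p : Fin 3 → Fin 3 → kk} (hp : LinearIndependent kk p)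
    (k : ℕ) :
    alpha (pointIdeal (p 0) ^ (2 * k) ⊓ pointIdeal (p 1) ^ (2 * k) ⊓ pointIdeal (p 2) ^ k) =
      (5 * k + 1) / 2 := by
  have h_inf : pointIdeal (p 0) ^ (2 * k) ⊓ pointIdeal (p 1) ^ (2 * k) ⊓ pointIdeal (p 2) ^ k =
      ⨅ j, pointIdeal (p j) ^ ![2 * k, 2 * k, k] j := by
    ext f
    simp [Submodule.mem_iInf, Fin.forall_fin_succ, and_assoc]
  rw [h_inf, alpha_iInf_pointIdeal_pow hp]
  refine IsLeast.csInf_eq ⟨⟨![(k + 1) / 2, (k + 1) / 2, 2 * k - (k + 1) / 2], ?_, ?_⟩, ?_⟩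
  · simp only [Fin.sum_univ_three, Matrix.cons_val]
    lia
  · intro j
    fin_cases j <;> simp only [Matrix.cons_val, Fin.reduceFinMk, Fin.mk_one, Fin.zero_eta] <;> lia
  · rintro d ⟨s, hsd, hs⟩
    rw [Fin.sum_univ_three] at hsd
    have hs₀ : 2 * k + s 0 ≤ d := hs 0
    have hs₁ : 2 * k + s 1 ≤ d := hs 1
    have hs₂ : k + s 2 ≤ d := hs 2
    lia

end FatPoints

theorem iInf_ceil_five_halves_mul_div :
    ⨅ k : ℕ+, (((5 * k + 1) / 2 : ℕ) : ℝ) / (k : ℕ) = 5 / 2 := by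
  have h_lower (k : ℕ+) : (5 / 2 : ℝ) ≤ (((5 * k + 1) / 2 : ℕ) : ℝ) / (k : ℕ) := by
    rw [div_le_div_iff₀ two_pos (by exact_mod_cast k.pos)]
    exact_mod_cast (by lia : 5 * (k : ℕ) ≤ (5 * k + 1) / 2 * 2)
  refine le_antisymm ?_ (le_ciInf h_lower)
  refine (ciInf_le ⟨5 / 2, Set.forall_mem_range.2 h_lower⟩ 2).trans_eq ?_
  norm_num

theorem waldschmidt_two_double_points_eq_general {kk : Type*} [Field kk] (p₁ p₂ p₃ : Fin 3 → kk)
    (hncol : ¬ ∃ g : MvPolynomial (Fin 3) kk, g ≠ 0 ∧ g.IsHomogeneous 1 ∧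
      MvPolynomial.eval p₁ g = 0 ∧ MvPolynomial.eval p₂ g = 0 ∧
      MvPolynomial.eval p₃ g = 0) :
    (⨅ k : ℕ+, (alpha (pointIdeal p₁ ^ (2 * (k : ℕ)) ⊓ pointIdeal p₂ ^ (2 * (k : ℕ)) ⊓
        pointIdeal p₃ ^ (k : ℕ)) : ℝ) / ((k : ℕ) : ℝ)) = 5 / 2 := by
  have hp : LinearIndependent kk ![p₁, p₂, p₃] := by
    refine linearIndependent_of_forall_linearForm_eq_zero fun g hg hgp => ?_
    by_contra hg0
    exact hncol ⟨g, hg0, hg, hgp 0, hgp 1, hgp 2⟩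
  rw [← iInf_ceil_five_halves_mul_div]
  refine iInf_congr fun k => ?_
  rw [← alpha_pointIdeal_two_double_points hp k]
  rfl

/-- Let `p₁, p₂, p₃` be three distinct non-collinear points of `ℙ²` and
let `Z' = 2p₁ + 2p₂ + p₃`.  Then the Waldschmidt constant of `I(Z')` equals `5/2`. -/
theorem waldschmidt_two_double_points_eq
    {kk : Type*} [Field kk] [IsAlgClosed kk]
    (p₁ p₂ p₃ : Fin 3 → kk)
    (hp10 : p₁ ≠ 0) (hp20 : p₂ ≠ 0) (hp30 : p₃ ≠ 0)
    (hp12 : ¬ projEq p₁ p₂) (hp13 : ¬ projEq p₁ p₃) (hp23 : ¬ projEq p₂ p₃)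
    (hncol : ¬ ∃ g : MvPolynomial (Fin 3) kk, g ≠ 0 ∧ g.IsHomogeneous 1 ∧
      MvPolynomial.eval p₁ g = 0 ∧ MvPolynomial.eval p₂ g = 0 ∧
      MvPolynomial.eval p₃ g = 0) :
    (⨅ k : ℕ+, (alpha (pointIdeal p₁ ^ (2 * (k : ℕ)) ⊓ pointIdeal p₂ ^ (2 * (k : ℕ)) ⊓
        pointIdeal p₃ ^ (k : ℕ)) : ℝ) / ((k : ℕ) : ℝ)) = 5 / 2 :=
  waldschmidt_two_double_points_eq_general p₁ p₂ p₃ hncol
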